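/- Derivability is preserved backwards along decomposition: if Φ ⇝ Ψ are finite sets of CPL₀ labelled sequents and every sequent in Ψ is derivable in the proof system for CPL₀, then every sequent in Φ is derivable in the proof system for CPL₀. -/

import Mathlib

open MeasureTheory

/-- The Cantor space `2^ω` of infinite binary sequences. -/
abbrev Cantor : Type := ℕ → Bool

/-- Rational numbers in the unit interval `[0,1]`. -/
abbrev I01 : Type := (Set.Icc (0 : ℚ) 1)

/-- The value of a rational `q ∈ [0,1]` as an extended nonnegative real. -/
noncomputable def qq (q : I01) : ENNReal := ENNReal.ofReal (q.1 : ℝ)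

/-- `μ` is the fair-coin Bernoulli (uniform) product measure on the Cantor space:
it is a probability measure giving each cylinder fixing the values on a finite set `s`
of coordinates the measure `2^{-|s|}`. -/
def IsCantorMeasure (μ : Measure Cantor) : Prop :=
  IsProbabilityMeasure μ ∧
    ∀ (s : Finset ℕ) (v : ℕ → Bool),
      μ {f : Cantor | ∀ i ∈ s, f i = v i} = (2 : ENNReal)⁻¹ ^ s.card

/-- Boolean formulas `b ::= xᵢ | ⊤ | ⊥ | ¬b | b ∧ c | b ∨ c`. -/
inductive BF : Type where
  | var : ℕ → BF
  | tt : BF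
  | ff : BF
  | neg : BF → BF
  | conj : BF → BF → BF
  | disj : BF → BF → BF
deriving DecidableEq

/-- The interpretation `⟦b⟧ ⊆ 2^ω` of a Boolean formula. -/
def BF.sem : BF → Set Cantor
  | .var i => {f | f i = true}
  | .tt => Set.univ
  | .ff => ∅
  | .neg b => (BF.sem b)ᶜ
  | .conj b c => BF.sem b ∩ BF.sem c
  | .disj b c => BF.sem b ∪ BF.sem c

/-- Formulas of univariate counting propositional logic CPL₀:
`A ::= i | ¬A | A ∧ B | A ∨ B | C^q A | D^q A` with `q` a rational in `[0,1]`. -/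
inductive CPL0 : Type where
  | atom : ℕ → CPL0
  | neg : CPL0 → CPL0
  | conj : CPL0 → CPL0 → CPL0
  | disj : CPL0 → CPL0 → CPL0
  | cnt : I01 → CPL0 → CPL0
  | dnt : I01 → CPL0 → CPL0
deriving DecidableEq

open scoped Classical in
/-- The interpretation `⟦A⟧ ⊆ 2^ω` of a CPL₀ formula (relative to the measure `μ`). -/
noncomputable def CPL0.sem (μ : Measure Cantor) : CPL0 → Set Cantor
  | .atom i => {f | f i = true}
  | .neg A => (CPL0.sem μ A)ᶜ
  | .conj A B => CPL0.sem μ A ∩ CPL0.sem μ B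
  | .disj A B => CPL0.sem μ A ∪ CPL0.sem μ B
  | .cnt q A => if qq q ≤ μ (CPL0.sem μ A) then Set.univ else ∅
  | .dnt q A => if μ (CPL0.sem μ A) < qq q then Set.univ else ∅

/-- Labelled formulas: `b ↣ A` (`fwd`) and `b ↢ A` (`bwd`). -/
inductive LF : Type where
  | fwd : BF → CPL0 → LF
  | bwd : BF → CPL0 → LF
deriving DecidableEq

/-- Validity of a labelled formula: `b ↣ A` is valid when `⟦b⟧ ⊆ ⟦A⟧`,
and `b ↢ A` is valid when `⟦A⟧ ⊆ ⟦b⟧`. -/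
def LF.valid (μ : Measure Cantor) : LF → Prop
  | .fwd b A => BF.sem b ⊆ CPL0.sem μ A
  | .bwd b A => CPL0.sem μ A ⊆ BF.sem b

/-- The labelled, one-sided, single-succedent sequent calculus for CPL₀:
`Der μ L` means that the sequent `⊢ L` is derivable. -/
inductive Der (μ : Measure Cantor) : LF → Prop where
  | ax1 {b : BF} {n : ℕ} :
      BF.sem b ⊆ BF.sem (.var n) → Der μ (.fwd b (.atom n))
  | ax2 {b : BF} {n : ℕ} :
      BF.sem (.var n) ⊆ BF.sem b → Der μ (.bwd b (.atom n))
  | runion {b c d : BF} {A : CPL0} :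
      Der μ (.fwd c A) → Der μ (.fwd d A) →
      BF.sem b ⊆ BF.sem (.disj c d) → Der μ (.fwd b A)
  | rinter {b c d : BF} {A : CPL0} :
      Der μ (.bwd c A) → Der μ (.bwd d A) →
      BF.sem (.conj c d) ⊆ BF.sem b → Der μ (.bwd b A)
  | negF {b c : BF} {A : CPL0} :
      Der μ (.bwd c A) → BF.sem b ⊆ BF.sem (.neg c) → Der μ (.fwd b (.neg A))
  | negB {b c : BF} {A : CPL0} :
      Der μ (.fwd c A) → BF.sem (.neg c) ⊆ BF.sem b → Der μ (.bwd b (.neg A))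
  | disjF1 {b : BF} {A B : CPL0} :
      Der μ (.fwd b A) → Der μ (.fwd b (.disj A B))
  | disjF2 {b : BF} {A B : CPL0} :
      Der μ (.fwd b B) → Der μ (.fwd b (.disj A B))
  | disjB {b : BF} {A B : CPL0} :
      Der μ (.bwd b A) → Der μ (.bwd b B) → Der μ (.bwd b (.disj A B))
  | conjF {b : BF} {A B : CPL0} :
      Der μ (.fwd b A) → Der μ (.fwd b B) → Der μ (.fwd b (.conj A B))
  | conjB1 {b : BF} {A B : CPL0} :
      Der μ (.bwd b A) → Der μ (.bwd b (.conj A B))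
  | conjB2 {b : BF} {A B : CPL0} :
      Der μ (.bwd b B) → Der μ (.bwd b (.conj A B))
  | muF {b : BF} {A : CPL0} :
      μ (BF.sem b) = 0 → Der μ (.fwd b A)
  | muB {b : BF} {A : CPL0} :
      μ (BF.sem b) = 1 → Der μ (.bwd b A)
  | cntF {b c : BF} {q : I01} {A : CPL0} :
      Der μ (.fwd c A) → qq q ≤ μ (BF.sem c) → Der μ (.fwd b (.cnt q A))
  | cntB {b c : BF} {q : I01} {A : CPL0} :
      Der μ (.bwd c A) → μ (BF.sem c) < qq q → Der μ (.bwd b (.cnt q A))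
  | dntF {b c : BF} {q : I01} {A : CPL0} :
      Der μ (.bwd c A) → μ (BF.sem c) < qq q → Der μ (.fwd b (.dnt q A))
  | dntB {b c : BF} {q : I01} {A : CPL0} :
      Der μ (.fwd c A) → qq q ≤ μ (BF.sem c) → Der μ (.bwd b (.dnt q A))

/-- Sequents: either a labelled formula `⊢ L`, or the falsum sequent `⊢ ⊥`. -/
inductive Sequent : Type where
  | lf : LF → Sequent
  | falsum : Sequent
deriving DecidableEq

/-- Validity of a sequent: the falsum sequent `⊢ ⊥` is never valid. -/
def Sequent.valid (μ : Measure Cantor) : Sequent → Prop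
  | .lf L => L.valid μ
  | .falsum => False

/-- Derivability of a sequent: the falsum sequent `⊢ ⊥` is never derivable. -/
def Sequent.der (μ : Measure Cantor) : Sequent → Prop
  | .lf L => Der μ L
  | .falsum => False

/-- The one-step decomposition rewriting relation `⇝₀` from a sequent to a
finite set of sequents. -/
inductive Dec0 (μ : Measure Cantor) : Sequent → Finset Sequent → Prop where
  | negF {b c : BF} {A : CPL0} :
      BF.sem b ⊆ BF.sem (.neg c) →
      Dec0 μ (.lf (.fwd b (.neg A))) {Sequent.lf (.bwd c A)}
  | negB {b c : BF} {A : CPL0} :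
      BF.sem (.neg c) ⊆ BF.sem b →
      Dec0 μ (.lf (.bwd b (.neg A))) {Sequent.lf (.fwd c A)}
  | disjF {b c d : BF} {A B : CPL0} :
      BF.sem b ⊆ BF.sem (.disj c d) →
      Dec0 μ (.lf (.fwd b (.disj A B))) {Sequent.lf (.fwd c A), Sequent.lf (.fwd d B)}
  | disjB {b : BF} {A B : CPL0} :
      Dec0 μ (.lf (.bwd b (.disj A B))) {Sequent.lf (.bwd b A), Sequent.lf (.bwd b B)}
  | conjF {b : BF} {A B : CPL0} :
      Dec0 μ (.lf (.fwd b (.conj A B))) {Sequent.lf (.fwd b A), Sequent.lf (.fwd b B)}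
  | conjB {b c d : BF} {A B : CPL0} :
      BF.sem (.conj c d) ⊆ BF.sem b →
      Dec0 μ (.lf (.bwd b (.conj A B))) {Sequent.lf (.bwd c A), Sequent.lf (.bwd d B)}
  | cntF {b c : BF} {q : I01} {A : CPL0} :
      qq q ≤ μ (BF.sem c) →
      Dec0 μ (.lf (.fwd b (.cnt q A))) {Sequent.lf (.fwd c A)}
  | cntB {b c : BF} {q : I01} {A : CPL0} :
      μ (BF.sem c) < qq q →
      Dec0 μ (.lf (.bwd b (.cnt q A))) {Sequent.lf (.bwd c A)}
  | dntF {b c : BF} {q : I01} {A : CPL0} :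
      μ (BF.sem c) < qq q →
      Dec0 μ (.lf (.fwd b (.dnt q A))) {Sequent.lf (.bwd c A)}
  | dntB {b c : BF} {q : I01} {A : CPL0} :
      qq q ≤ μ (BF.sem c) →
      Dec0 μ (.lf (.bwd b (.dnt q A))) {Sequent.lf (.fwd c A)}
  | muF {b : BF} {A : CPL0} :
      μ (BF.sem b) = 0 → Dec0 μ (.lf (.fwd b A)) ∅
  | muB {b : BF} {A : CPL0} :
      μ (BF.sem b) = 1 → Dec0 μ (.lf (.bwd b A)) ∅
  | dnt0 {b : BF} {A : CPL0} :
      μ (BF.sem b) ≠ 0 → Dec0 μ (.lf (.fwd b (.dnt 0 A))) {Sequent.falsum}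
  | cnt0 {b : BF} {A : CPL0} :
      μ (BF.sem b) ≠ 1 → Dec0 μ (.lf (.bwd b (.cnt 0 A))) {Sequent.falsum}

/-- The set-decomposition relation `⇝` on finite sets of sequents:
`Φ ⇝ Ψ` when `Φ = Φ' ∪ {⊢ L}`, `⊢ L ⇝₀ Ψ'` and `Ψ = Φ' ∪ Ψ'`. -/
def Dec (μ : Measure Cantor) (Φ Ψ : Finset Sequent) : Prop :=
  ∃ (Φ' Ψ' : Finset Sequent) (s : Sequent),
    Dec0 μ s Ψ' ∧ Φ = insert s Φ' ∧ Ψ = Φ' ∪ Ψ'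

/-- A finite set of sequents is `⇝`-normal when no decomposition step applies to it. -/
def DecNormal (μ : Measure Cantor) (Φ : Finset Sequent) : Prop :=
  ¬ ∃ Ψ : Finset Sequent, Dec μ Φ Ψ

/-!
Each decomposition step `⊢ L ⇝₀ Ψ` is an inference with premises `Ψ` and conclusion `⊢ L`, read
upwards, so it suffices to see that this inference is admissible in the calculus. Most steps are
literally rules. A step at `b ↣ A ∨ B`, which distributes two different labels over the disjuncts,
is the composite of the single-premise disjunction rules with `R∪`, and dually for `b ↢ A ∧ B`
with `R∩`. The steps to `⊢ ⊥` have an underivable premise.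
-/

theorem Der.disjF {μ : Measure Cantor} {b c d : BF} {A B : CPL0} (hA : Der μ (.fwd c A))
    (hB : Der μ (.fwd d B)) (hb : b.sem ⊆ (BF.disj c d).sem) : Der μ (.fwd b (.disj A B)) :=
  .runion (.disjF1 hA) (.disjF2 hB) hb

theorem Der.conjB {μ : Measure Cantor} {b c d : BF} {A B : CPL0} (hA : Der μ (.bwd c A))
    (hB : Der μ (.bwd d B)) (hb : (BF.conj c d).sem ⊆ b.sem) : Der μ (.bwd b (.conj A B)) :=
  .rinter (.conjB1 hA) (.conjB2 hB) hb

theorem Dec0.der_of_forall_der {μ : Measure Cantor} {s : Sequent} {Ψ : Finset Sequent}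
    (hdec : Dec0 μ s Ψ) (hΨ : ∀ t ∈ Ψ, t.der μ) : s.der μ := by
  cases hdec with
    simp only [Finset.forall_mem_insert, Finset.mem_singleton, forall_eq,
      Finset.forall_mem_empty_iff] at hΨ
  | negF hb => exact Der.negF hΨ hb
  | negB hb => exact Der.negB hΨ hb
  | disjF hb => exact Der.disjF hΨ.1 hΨ.2 hb
  | disjB => exact Der.disjB hΨ.1 hΨ.2
  | conjF => exact Der.conjF hΨ.1 hΨ.2
  | conjB hb => exact Der.conjB hΨ.1 hΨ.2 hb
  | cntF hq => exact Der.cntF hΨ hq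
  | cntB hq => exact Der.cntB hΨ hq
  | dntF hq => exact Der.dntF hΨ hq
  | dntB hq => exact Der.dntB hΨ hq
  | muF hb => exact Der.muF hb
  | muB hb => exact Der.muB hb
  | dnt0 | cnt0 => exact hΨ.elim

theorem Dec.forall_of_forall {μ : Measure Cantor} {P : Sequent → Prop}
    (hP : ∀ {s Ψ}, Dec0 μ s Ψ → (∀ t ∈ Ψ, P t) → P s) {Φ Ψ : Finset Sequent}
    (hdec : Dec μ Φ Ψ) (hΨ : ∀ s ∈ Ψ, P s) : ∀ s ∈ Φ, P s := by
  obtain ⟨Φ', Ψ', s, hs, rfl, rfl⟩ := hdec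
  obtain ⟨hΦ', hΨ'⟩ := Finset.forall_mem_union.mp hΨ
  exact (Finset.forall_mem_insert _ _ _).mpr ⟨hP hs hΨ', hΦ'⟩

theorem cpl0_derivability_preserved_backwards_general
    (μ : Measure Cantor) (Φ Ψ : Finset Sequent) (hdec : Dec μ Φ Ψ) (hΨ : ∀ s ∈ Ψ, s.der μ) :
    ∀ s ∈ Φ, s.der μ :=
  hdec.forall_of_forall Dec0.der_of_forall_der hΨ

/-- **Backwards preservation of derivability.** If `Φ ⇝ Ψ` and every
sequent in `Ψ` is derivable in the proof system for CPL₀, then every sequent in `Φ`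
is derivable in the proof system for CPL₀. -/
theorem cpl0_derivability_preserved_backwards
    (μ : Measure Cantor) (hμ : IsCantorMeasure μ)
    (Φ Ψ : Finset Sequent) (hdec : Dec μ Φ Ψ) (hΨ : ∀ s ∈ Ψ, s.der μ) :
    ∀ s ∈ Φ, s.der μ :=
  cpl0_derivability_preserved_backwards_general μ Φ Ψ hdec hΨ
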